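/- Case 3 of the meeting-point analysis: in a rooted tree, if u is an ancestor of q and dist(v,q) ≤ dist(u,q), then u is an ancestor of v, and the median of u, v, q equals the lowest common ancestor of v and q. -/

import Mathlib

/-- `m` lies on the path from `a` to `b` in the graph `G`. -/
def onPath {V : Type*} (G : SimpleGraph V) (a m b : V) : Prop :=
  G.dist a m + G.dist m b = G.dist a b

/-- `m` is a median of the vertices `u`, `v`, `w`: it lies on the path from `u` to `v`,
on the path from `u` to `w`, and on the path from `v` to `w`. -/
def isMedian {V : Type*} (G : SimpleGraph V) (m u v w : V) : Prop :=
  onPath G u m v ∧ onPath G u m w ∧ onPath G v m w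

/-- `u` is an ancestor of `v` with respect to the root `r`:
`u` lies on the path from `r` to `v`. -/
def isAncestor {V : Type*} (G : SimpleGraph V) (r u v : V) : Prop :=
  onPath G r u v

/-- `l` is a lowest common ancestor of `u` and `v` with respect to the root `r`. -/
def isLCA {V : Type*} (G : SimpleGraph V) (r l u v : V) : Prop :=
  isAncestor G r l u ∧ isAncestor G r l v ∧
    ∀ a : V, isAncestor G r a u → isAncestor G r a v → isAncestor G r a l

/-!
In a tree, a vertex between `a` and `b` lies on every walk from `a` to `b`, in particular on one
through a third vertex `x`; so it lies between `a` and `x` or between `x` and `b`. Splitting the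
path from `r` to `q` at `v` puts `u` above `v`: as `v` is no farther from `q` than `u` is, `u` can
lie between `v` and `q` only when `v = u`. The median `m` of `u`, `v`, `q` is then a common ancestor
of `v` and `q`, and splitting the path from `v` to `q` at another common ancestor `a` puts `a` above
`m`.
-/

section

variable {V : Type*} {G : SimpleGraph V} {r a b l l' m n u v q : V}

namespace onPath

theorem symm (h : onPath G a m b) : onPath G b m a := by
  unfold onPath at *
  rw [G.dist_comm (u := b) (v := m), G.dist_comm (u := m) (v := a), G.dist_comm (u := b) (v := a),
    add_comm, h]

theorem trans_right (hG : G.Connected) (h₁ : onPath G a m b) (h₂ : onPath G m n b) :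
    onPath G a n b := by
  have tri_amn : G.dist a n ≤ G.dist a m + G.dist m n := hG.dist_triangle
  have tri_anb : G.dist a b ≤ G.dist a n + G.dist n b := hG.dist_triangle
  unfold onPath at *
  lia

theorem trans_right_left (hG : G.Connected) (h₁ : onPath G a m b) (h₂ : onPath G m n b) :
    onPath G a m n := by
  have h : onPath G a n b := h₁.trans_right hG h₂
  unfold onPath at *
  lia

theorem eq_of_dist_le (hG : G.Connected) (h : onPath G a m b) (hd : G.dist a b ≤ G.dist m b) :
    a = m := by
  unfold onPath at h
  exact hG.dist_eq_zero_iff.mp (by lia)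

theorem antisymm (hG : G.Connected) (h₁ : onPath G a m n) (h₂ : onPath G a n m) : m = n := by
  refine h₂.symm.eq_of_dist_le hG ?_
  rw [G.dist_comm (u := m), G.dist_comm (u := n), ← h₁]
  exact Nat.le_add_right _ _

theorem of_mem_support {p : G.Walk a b} (hp : p.length = G.dist a b) (hm : m ∈ p.support) :
    onPath G a m b := by
  classical
  have length_split : (p.takeUntil m hm).length + (p.dropUntil m hm).length = p.length := by
    rw [← SimpleGraph.Walk.length_append, p.take_spec hm]
  refine le_antisymm ?_ ((p.takeUntil m hm).reachable.dist_triangle_left b)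
  rw [← hp, ← length_split]
  exact add_le_add (SimpleGraph.dist_le _) (SimpleGraph.dist_le _)

theorem mem_support (hG : G.IsTree) (h : onPath G a m b) (p : G.Walk a b) : m ∈ p.support := by
  classical
  obtain ⟨p₁, hp₁⟩ := hG.connected.exists_walk_length_eq_dist a m
  obtain ⟨p₂, hp₂⟩ := hG.connected.exists_walk_length_eq_dist m b
  have isPath_append : (p₁.append p₂).IsPath :=
    SimpleGraph.Walk.isPath_of_length_eq_dist _ <| by
      rw [SimpleGraph.Walk.length_append, hp₁, hp₂, h]
  have append_eq_bypass : p₁.append p₂ = p.bypass :=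
    (hG.existsUnique_path a b).unique isPath_append p.bypass_isPath
  refine p.support_bypass_subset_support ?_
  rw [← append_eq_bypass, SimpleGraph.Walk.mem_support_append_iff]
  exact Or.inl p₁.end_mem_support

theorem left_or_right (hG : G.IsTree) (h : onPath G a m b) (x : V) :
    onPath G a m x ∨ onPath G x m b := by
  obtain ⟨p₁, hp₁⟩ := hG.connected.exists_walk_length_eq_dist a x
  obtain ⟨p₂, hp₂⟩ := hG.connected.exists_walk_length_eq_dist x b
  exact ((SimpleGraph.Walk.mem_support_append_iff p₁ p₂).mp (h.mem_support hG _)).imp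
    (of_mem_support hp₁) (of_mem_support hp₂)

end onPath

theorem isAncestor.of_dist_le (hG : G.IsTree) (huq : isAncestor G r u q)
    (hd : G.dist v q ≤ G.dist u q) : isAncestor G r u v := by
  rcases onPath.left_or_right hG huq v with hruv | hvuq
  · exact hruv
  · obtain rfl : v = u := hvuq.eq_of_dist_le hG.connected hd
    simp [isAncestor, onPath]

theorem isLCA.unique (hG : G.Connected) (hl : isLCA G r l u v) (hl' : isLCA G r l' u v) :
    l = l' :=
  onPath.antisymm hG (hl'.2.2 l hl.1 hl.2.1) (hl.2.2 l' hl'.1 hl'.2.1)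

theorem isMedian.isLCA (hG : G.IsTree) (hm : isMedian G m u v q) (huv : isAncestor G r u v)
    (huq : isAncestor G r u q) : isLCA G r m v q := by
  obtain ⟨hmuv, hmuq, hmvq⟩ := hm
  refine ⟨onPath.trans_right hG.connected huv hmuv, onPath.trans_right hG.connected huq hmuq, ?_⟩
  intro a hav haq
  rcases hmvq.left_or_right hG a with hvma | hamq
  · exact onPath.trans_right_left hG.connected hav hvma.symm
  · exact onPath.trans_right_left hG.connected haq hamq

theorem median_case3_general (hG : G.IsTree) (huq : isAncestor G r u q)
    (hd : G.dist v q ≤ G.dist u q) :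
    isAncestor G r u v ∧
      ∀ m l : V, isMedian G m u v q → isLCA G r l v q → m = l := by
  have huv : isAncestor G r u v := isAncestor.of_dist_le hG huq hd
  exact ⟨huv, fun m l hm hl => (hm.isLCA hG huv huq).unique hG.connected hl⟩

end

/-- Case 3: if `u` is an ancestor of `q` and `dist(v,q) ≤ dist(u,q)`, then `u`
is an ancestor of `v`, and the median of `u`, `v`, `q` equals the LCA of `v`
and `q`. -/
theorem median_case3 {V : Type*} [Fintype V] (G : SimpleGraph V)
    (hG : G.IsTree) (r u v q : V)
    (huq : isAncestor G r u q) (hd : G.dist v q ≤ G.dist u q) :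
    isAncestor G r u v ∧
      ∀ m l : V, isMedian G m u v q → isLCA G r l v q → m = l :=
  median_case3_general hG huq hd
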